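/- Let $\mathcal A$ be a finite alphabet with $N\ge 2$ letters and $\mathcal W$ the set of finite words over $\mathcal A$, including the empty word $\emptyset$; write $|w|$ for the length of $w$ and $wi$ for $w$ followed by the letter $i$. Let $\sim$ be an equivalence relation on $\mathcal W$ such that $v\sim w$ implies $|v|=|w|$. Let $m:\mathcal A\to(0,1)$ satisfy $\sum_{a\in\mathcal A}m(a)=1$, and put $m(w_1\cdots w_n)=m(w_1)\cdots m(w_n)$, $m(\emptyset)=1$. Let $p(v,w)=m(w)/\sum_{\hat v\sim v}m(\hat v)$ if $w=\hat v i$ for some $\hat v\sim v$ and $i\in\mathcal A$, and $p(v,w)=0$ otherwise; let $p_0(v,w)=\delta_v(w)$ and $p_n(v,w)=\sum_{u\in\mathcal W}p_{n-1}(v,u)\,p(u,w)$ for $n\ge1$; let $g(v,w)=p_{|w|-|v|}(v,w)$ if $|v|\le|w|$ and $g(v,w)=0$ otherwise. Let $q(v,w)=\frac{g(v,w)}{m(w)}\sum_{\hat v\sim v}m(\hat v)$ for $v\ne w$, and $q(v,v)=1$. Then for all words $v,w\in\mathcal W$ and every letter $i\in\mathcal A$ with $v\not\sim w$ and $v\neq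 wi$, one has $$q(v,wi)=\frac{\sum_{\hat w\sim w}q(v,\hat w)\,m(\hat w)}{\sum_{\hat w\sim w}m(\hat w)}.$$ -/

import Mathlib

namespace Martin

/-- Finite words over the alphabet `A`; `[]` is the empty word and `w ++ [i]` is the word `wi`. -/
abbrev Word (A : Type*) := List A

/-- The mass of a word: `m(w₁⋯wₙ) = m(w₁)⋯m(wₙ)`, `m(∅) = 1`. -/
noncomputable def mW {A : Type*} (m : A → ℝ) (w : Word A) : ℝ := (w.map m).prod

/-- Total mass of the equivalence class of `v`: `Σ_{v̂ ∼ v} m(v̂)`. The class is finite, since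
equivalent words over a finite alphabet are assumed to have the same length. -/
noncomputable def massCl {A : Type*} (sim : Word A → Word A → Prop) (m : A → ℝ)
    (v : Word A) : ℝ :=
  ∑ᶠ u ∈ {u : Word A | sim u v}, mW m u

open Classical in
/-- Transition probability: `p(v,w) = m(w)/(Σ_{v̂∼v} m(v̂))` if `w = v̂i` for some
`v̂ ∼ v` and some letter `i`, and `0` otherwise. -/
noncomputable def pTrans {A : Type*} (sim : Word A → Word A → Prop) (m : A → ℝ)
    (v w : Word A) : ℝ :=
  if ∃ v' : Word A, ∃ i : A, sim v' v ∧ w = v' ++ [i] then mW m w / massCl sim m v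
  else 0

open Classical in
/-- `n`-step transition probabilities: `p₀(v,w) = δ_v(w)`, `pₙ(v,w) = Σ_u pₙ₋₁(v,u) p(u,w)`.
Only the finitely many words `u` with `|u| + 1 = |w|` contribute to the sum. -/
noncomputable def pn {A : Type*} (sim : Word A → Word A → Prop) (m : A → ℝ) :
    ℕ → Word A → Word A → ℝ
  | 0, v, w => if w = v then 1 else 0
  | n + 1, v, w => ∑ᶠ u : Word A, pn sim m n v u * pTrans sim m u w

/-- The Green function: `g(v,w) = p_{|w|−|v|}(v,w)`, and `0` if `|w| < |v|`. -/
noncomputable def green {A : Type*} (sim : Word A → Word A → Prop) (m : A → ℝ)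
    (v w : Word A) : ℝ :=
  if v.length ≤ w.length then pn sim m (w.length - v.length) v w else 0

open Classical in
/-- The function `q(v,w) = g(v,w)·(Σ_{v̂∼v} m(v̂))/m(w)` for `v ≠ w`, and `q(v,v) = 1`. -/
noncomputable def qfun {A : Type*} (sim : Word A → Word A → Prop) (m : A → ℝ)
    (v w : Word A) : ℝ :=
  if v = w then 1 else green sim m v w * massCl sim m v / mW m w

end Martin

namespace Martin

variable {A : Type*} {sim : Word A → Word A → Prop} {m : A → ℝ}

theorem mW_pos (hm : ∀ a, 0 < m a) (w : Word A) : 0 < mW m w :=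
  List.prod_pos (by simpa [mW] using fun a _ => hm a)

theorem massCl_congr (hsim : Equivalence sim) {v w : Word A} (h : sim v w) :
    massCl sim m v = massCl sim m w := by
  have : {u : Word A | sim u v} = {u | sim u w} :=
    Set.ext fun u => ⟨fun hu => hsim.trans hu h, fun hu => hsim.trans hu (hsim.symm h)⟩
  simp only [massCl, this]

theorem finite_class [Finite A] (hlen : ∀ v w : Word A, sim v w → v.length = w.length)
    (w : Word A) : {u : Word A | sim u w}.Finite :=
  (List.finite_length_eq A w.length).subset fun u hu => hlen u w hu

open Classical in
theorem pTrans_append_singleton (hsim : Equivalence sim) (u w : Word A) (i : A) :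
    pTrans sim m u (w ++ [i]) =
      if sim u w then mW m (w ++ [i]) / massCl sim m w else 0 := by
  have hiff : (∃ v' : Word A, ∃ j : A, sim v' u ∧ w ++ [i] = v' ++ [j]) ↔ sim u w := by
    constructor
    · rintro ⟨v', j, hv', h⟩
      obtain ⟨rfl, -⟩ := List.append_inj' h rfl
      exact hsim.symm hv'
    · exact fun h => ⟨w, i, hsim.symm h, rfl⟩
  unfold pTrans
  by_cases h : sim u w
  · rw [if_pos (hiff.2 h), if_pos h, massCl_congr hsim h]
  · rw [if_neg (mt hiff.1 h), if_neg h]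

/-- Only the words equivalent to `w` have a transition to `wi`, all with the same probability. -/
theorem pn_succ_append_singleton [Finite A] (hsim : Equivalence sim)
    (hlen : ∀ v w : Word A, sim v w → v.length = w.length) (n : ℕ) (v w : Word A) (i : A) :
    pn sim m (n + 1) v (w ++ [i]) =
      (∑ᶠ u ∈ {u : Word A | sim u w}, pn sim m n v u) *
        (mW m (w ++ [i]) / massCl sim m w) := by
  classical
  rw [finsum_mem_mul' _ _ (finite_class hlen w), pn]
  refine finsum_congr fun u => ?_
  rw [pTrans_append_singleton hsim, finsum_eq_if]
  simp only [Set.mem_ofPred_eq, mul_ite, mul_zero]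

theorem qfun_mul_mW (hm : ∀ a, 0 < m a) {v w : Word A} (h : v ≠ w) :
    qfun sim m v w * mW m w = green sim m v w * massCl sim m v := by
  rw [qfun, if_neg h, div_mul_cancel₀ _ (mW_pos hm w).ne']

theorem finsum_qfun_mul_mW [Finite A]
    (hlen : ∀ v w : Word A, sim v w → v.length = w.length) (hm : ∀ a, 0 < m a)
    {v w : Word A} (hvw : ¬ sim v w) :
    ∑ᶠ u ∈ {u : Word A | sim u w}, qfun sim m v u * mW m u =
      (∑ᶠ u ∈ {u : Word A | sim u w}, green sim m v u) * massCl sim m v := by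
  rw [finsum_mem_mul' _ _ (finite_class hlen w)]
  refine finsum_mem_congr rfl fun u hu => qfun_mul_mW hm ?_
  rintro rfl
  exact hvw hu

/-- The Green function satisfies the last-step decomposition at every `wi ≠ v`. -/
theorem green_append_singleton [Finite A] (hsim : Equivalence sim)
    (hlen : ∀ v w : Word A, sim v w → v.length = w.length)
    {v w : Word A} {i : A} (hvwi : v ≠ w ++ [i]) :
    green sim m v (w ++ [i]) =
      (∑ᶠ u ∈ {u : Word A | sim u w}, green sim m v u) *
        (mW m (w ++ [i]) / massCl sim m w) := by
  by_cases hl : v.length ≤ w.length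
  · have hsum : ∑ᶠ u ∈ {u : Word A | sim u w}, green sim m v u =
        ∑ᶠ u ∈ {u : Word A | sim u w}, pn sim m (w.length - v.length) v u :=
      finsum_mem_congr rfl fun u hu => by rw [green, hlen u w hu, if_pos hl]
    have hlen' : (w ++ [i]).length - v.length = w.length - v.length + 1 := by
      rw [List.length_append, List.length_singleton]; omega
    rw [hsum, green, if_pos (by rw [List.length_append]; omega), hlen',
      pn_succ_append_singleton hsim hlen]
  · have hsum : ∑ᶠ u ∈ {u : Word A | sim u w}, green sim m v u = 0 :=
      finsum_mem_eq_zero_of_forall_eq_zero fun u hu => by rw [green, hlen u w hu, if_neg hl]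
    rw [hsum, zero_mul, green]
    split_ifs with h
    · have h0 : (w ++ [i]).length - v.length = 0 := by
        rw [List.length_append, List.length_singleton]; omega
      rw [h0, pn, if_neg hvwi.symm]
    · rfl

end Martin

theorem qfun_recursion {A : Type*} [Fintype A] (hA : 2 ≤ Fintype.card A)
    (sim : Martin.Word A → Martin.Word A → Prop) (hsim : Equivalence sim)
    (hlen : ∀ v w : Martin.Word A, sim v w → v.length = w.length)
    (m : A → ℝ) (hm : ∀ a, m a ∈ Set.Ioo (0 : ℝ) 1) (hm1 : ∑ a, m a = 1)
    (v w : Martin.Word A) (i : A) (hvw : ¬ sim v w) (hvwi : v ≠ w ++ [i]) :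
    Martin.qfun sim m v (w ++ [i]) =
      (∑ᶠ w' ∈ {u : Martin.Word A | sim u w}, Martin.qfun sim m v w' * Martin.mW m w') /
        (∑ᶠ w' ∈ {u : Martin.Word A | sim u w}, Martin.mW m w') := by
  have hpos : ∀ a, 0 < m a := fun a => (hm a).1
  have hne := (Martin.mW_pos hpos (w ++ [i])).ne'
  rw [Martin.finsum_qfun_mul_mW hlen hpos hvw, Martin.qfun, if_neg hvwi,
    Martin.green_append_singleton hsim hlen hvwi, ← Martin.massCl]
  field_simp
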